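/- Suppose K = ⌈n^{1−ε}⌉ for a constant 0 < ε < 1 and M is a fixed positive integer constant. Then under the Uniform popularity distribution, with probability 1 − o(1) over the random cache placement there exists a file W_j whose Voronoi tessellation V_j contains a cell of size Θ(K·log n/M); i.e., there exist constants c_1, c_2 > 0 such that some Voronoi cell has size between c_1·K·log n/M and c_2·K·log n/M. -/

import Mathlib

open scoped Classical BigOperators
open Filter

/-- Nodes of the `m × m` torus grid (a `√n × √n` grid with wrap-around, `n = m²`). -/
abbrev Node (m : ℕ) := Fin m × Fin m

/-- Wrap-around distance between two coordinates in `Fin m`. -/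
def cdist {m : ℕ} (a b : Fin m) : ℕ :=
  min ((a.val + m - b.val) % m) ((b.val + m - a.val) % m)

/-- Graph (shortest-path) distance on the torus grid. -/
def torusDist {m : ℕ} (u v : Node m) : ℕ := cdist u.1 v.1 + cdist u.2 v.2

/-- A cache placement: each of the `m²` nodes fills `M` cache slots with files from a
library of `K` files.  Under the Uniform popularity distribution the random placement
is uniform over all such functions (each slot i.i.d. uniform on the `K` files). -/
abbrev Placement (m M K : ℕ) := Node m → Fin M → Fin K

/-- Node `u` has cached file `j`. -/
def cached {m M K : ℕ} (ω : Placement m M K) (u : Node m) (j : Fin K) : Prop :=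
  ∃ i, ω u i = j

/-- Probability of an event under the uniform measure on a finite type. -/
noncomputable def unifProb {Ω : Type*} [Fintype Ω] (E : Set Ω) : ℝ :=
  ((Finset.univ.filter (fun ω => ω ∈ E)).card : ℝ) / (Fintype.card Ω : ℝ)

/-- `A` is a Voronoi assignment for file `j`: every node is assigned to a node that
cached `j` and is at minimum graph distance (the tie-breaking being encoded by the
choice of `A`). -/
def nearestAssignment {m M K : ℕ} (ω : Placement m M K) (j : Fin K)
    (A : Node m → Node m) : Prop :=
  ∀ w, cached ω (A w) j ∧ ∀ v, cached ω v j → torusDist w (A w) ≤ torusDist w v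

/-- The Voronoi cell of center `v` under the assignment `A`. -/
noncomputable def cell {m : ℕ} (A : Node m → Node m) (v : Node m) : Finset (Node m) :=
  Finset.univ.filter (fun w => A w = v)

/-- Library size `K = ⌈n^(1-ε)⌉`. -/
noncomputable def Kf (ε : ℝ) (n : ℕ) : ℕ := ⌈(n : ℝ) ^ (1 - ε)⌉₊

/-!
Write `T = K log n / M`. A ball with at least `3T` nodes misses a given file with probability at
most `(1 - 1/K)^(3MT) ≤ n⁻³`, so by a union bound every file is cached within distance `O(√T)` of
every node, and then all Voronoi cells have `O(T)` nodes. Conversely, a ball with at most `100κT`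
nodes contains no second copy of the file in a given slot of its center with probability at least
`(1 - 1/K)^(100κMT) ≥ n^(-200κ)`. The centers of a maximal separated set carry at least
`n / (324κT)` disjoint balls of this kind, for which these events are independent. As `T` is
`n^(1 - ε)` up to a logarithm, for `200κ < ε` one of the events occurs with high probability, and
then the cell of that center contains the concentric ball of half the radius, which has at least
`κT` nodes.
-/

open MeasureTheory ProbabilityTheory

section UniformMeasure

lemma unifProb_eq_uniformOn_univ_real {Ω : Type*} [Fintype Ω] [MeasurableSpace Ω]
    [MeasurableSingletonClass Ω] (E : Set Ω) :
    unifProb E = (uniformOn Set.univ).real E := by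
  simp only [unifProb, measureReal_def, uniformOn_univ, ENNReal.toReal_div, ENNReal.toReal_natCast,
    Measure.count_apply_finite _ E.toFinite]
  congr! 3
  ext
  simp

lemma unifProb_mono {Ω : Type*} [Fintype Ω] {E F : Set Ω} (h : E ⊆ F) :
    unifProb E ≤ unifProb F := by
  unfold unifProb
  gcongr

lemma unifProb_le_one {Ω : Type*} [Fintype Ω] (E : Set Ω) : unifProb E ≤ 1 :=
  div_le_one_of_le₀ (Nat.cast_le.2 (Finset.card_le_univ _)) (Nat.cast_nonneg _)

variable {V Y : Type*} [Finite Y] [MeasurableSpace Y] [MeasurableSingletonClass Y]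

lemma uniformOn_univ_eq_pi [Fintype V] :
    (uniformOn Set.univ : Measure (V → Y)) = Measure.pi fun _ => uniformOn Set.univ := by
  rw [← uniformOn_pi, Set.pi_univ]

variable [Finite V] [Nonempty Y]

lemma iIndepFun_eval_uniformOn_univ :
    iIndepFun (fun (v : V) (ω : V → Y) => ω v) (uniformOn Set.univ) := by
  cases nonempty_fintype V
  rw [uniformOn_univ_eq_pi]
  exact iIndepFun_pi (X := fun _ => id) fun _ => aemeasurable_id

lemma uniformOn_univ_real_eval_preimage (v : V) (T : Set Y) :
    (uniformOn Set.univ).real ((fun ω : V → Y => ω v) ⁻¹' T) = (uniformOn Set.univ).real T := by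
  cases nonempty_fintype V
  rw [uniformOn_univ_eq_pi]
  exact (measurePreserving_eval _ v).measureReal_preimage
    MeasurableSet.of_discrete.nullMeasurableSet

lemma uniformOn_univ_real_forall_mem (S : Finset V) (T : V → Set Y) :
    (uniformOn Set.univ).real {ω : V → Y | ∀ v ∈ S, ω v ∈ T v} =
      ∏ v ∈ S, (uniformOn Set.univ).real (T v) := by
  have indep := congrArg ENNReal.toReal <|
    iIndepFun_eval_uniformOn_univ.measure_inter_preimage_eq_mul S (sets := T)
      fun _ _ => .of_discrete
  simp only [ENNReal.toReal_prod, ← measureReal_def, uniformOn_univ_real_eval_preimage] at indep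
  rw [← indep]
  congr 1
  ext ω
  simp only [Set.mem_ofPred_eq, Set.mem_iInter, Set.mem_preimage]

lemma uniformOn_univ_real_inter_of_dependsOn {S T : Finset V} (hST : Disjoint S T)
    {E F : Set (V → Y)} (hE : DependsOn (· ∈ E) (S : Set V)) (hF : DependsOn (· ∈ F) (T : Set V)) :
    (uniformOn Set.univ).real (E ∩ F) =
      (uniformOn Set.univ).real E * (uniformOn Set.univ).real F := by
  obtain ⟨f, hf⟩ := dependsOn_iff_exists_comp.1 hE
  obtain ⟨g, hg⟩ := dependsOn_iff_exists_comp.1 hF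
  have preimage_f : (fun (ω : V → Y) (v : S) => ω v) ⁻¹' {η | f η} = E := by
    ext ω
    exact (congrFun hf ω).symm.to_iff
  have preimage_g : (fun (ω : V → Y) (v : T) => ω v) ⁻¹' {η | g η} = F := by
    ext ω
    exact (congrFun hg ω).symm.to_iff
  have restrict_indep := iIndepFun_eval_uniformOn_univ.indepFun_finset S T hST
    fun v => measurable_pi_apply (X := fun _ : V => Y) v
  have inter_eq := restrict_indep.measure_inter_preimage_eq_mul {η | f η} {η | g η}
    .of_discrete .of_discrete
  rw [preimage_f, preimage_g] at inter_eq
  simpa only [measureReal_def, ENNReal.toReal_mul] using congrArg ENNReal.toReal inter_eq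

lemma uniformOn_univ_real_biInter_of_dependsOn {J : Type*} {C : Finset J} {B : J → Finset V}
    {E : J → Set (V → Y)} (hB : (C : Set J).PairwiseDisjoint B)
    (hE : ∀ c ∈ C, DependsOn (· ∈ E c) (B c : Set V)) :
    (uniformOn Set.univ).real (⋂ c ∈ C, E c) = ∏ c ∈ C, (uniformOn Set.univ).real (E c) := by
  induction C using Finset.induction_on with
  | empty => simp
  | insert c C hc ih =>
    rw [Finset.forall_mem_insert] at hE
    rw [Finset.coe_insert] at hB
    have disjoint : Disjoint (B c) (C.biUnion B) := (Finset.disjoint_biUnion_right _ _ _).2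
      fun c' hc' => hB (Set.mem_insert _ _) (Set.mem_insert_of_mem _ hc')
        (ne_of_mem_of_not_mem hc' hc).symm
    have depends : DependsOn (· ∈ ⋂ c' ∈ C, E c') (C.biUnion B : Set V) := by
      intro ω ω' h
      simp only [Set.mem_iInter, eq_iff_iff]
      exact forall₂_congr fun c' hc' => (hE.2 c' hc' fun v hv =>
        h v (Finset.mem_biUnion.2 ⟨c', hc', hv⟩)).to_iff
    rw [Finset.set_biInter_insert, Finset.prod_insert hc,
      uniformOn_univ_real_inter_of_dependsOn disjoint hE.1 depends,
      ih (hB.subset (Set.subset_insert _ _)) hE.2]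

end UniformMeasure

section UniqueHolder

variable {V ι X : Type*}

/-- The placements in which no node of `S` other than `v` holds the file stored in slot `i` of `v`.
Reading the file off from the placement, instead of fixing it, avoids a factor `1 / card X` in the
probability that the center `v` holds it. -/
def uniqueHolder (S : Finset V) (v : V) (i : ι) : Set (V → ι → X) :=
  {ω | ∀ u ∈ S, u ≠ v → ∀ i', ω u i' ≠ ω v i}

lemma dependsOn_mem_uniqueHolder {S : Finset V} {v : V} (hv : v ∈ S) (i : ι) :
    DependsOn (· ∈ (uniqueHolder S v i : Set (V → ι → X))) (S : Set V) := by
  intro ω ω' h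
  have hS : ∀ u ∈ S, ω u = ω' u := fun u hu => h u hu
  simp +contextual only [uniqueHolder, Set.mem_ofPred_eq, hS, hv]

variable [Fintype X] [MeasurableSpace X] [MeasurableSingletonClass X]

lemma uniformOn_univ_real_singleton (x : X) :
    (uniformOn Set.univ).real {x} = (Fintype.card X : ℝ)⁻¹ := by
  simp [measureReal_def, uniformOn_univ]

variable [Fintype ι] [Nonempty X]

lemma uniformOn_univ_real_forall_ne (x : X) :
    (uniformOn Set.univ).real {y : ι → X | ∀ i, y i ≠ x} =
      (1 - (Fintype.card X : ℝ)⁻¹) ^ Fintype.card ι := by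
  simpa [probReal_compl_eq_one_sub, uniformOn_univ_real_singleton] using
    uniformOn_univ_real_forall_mem (Finset.univ : Finset ι) fun _ => {x}ᶜ

variable [Finite V]

lemma uniformOn_univ_real_forall_mem_forall_ne (S : Finset V) (x : X) :
    (uniformOn Set.univ).real {ω : V → ι → X | ∀ u ∈ S, ∀ i, ω u i ≠ x} =
      (1 - (Fintype.card X : ℝ)⁻¹) ^ (Fintype.card ι * S.card) := by
  simpa [uniformOn_univ_real_forall_ne, pow_mul] using
    uniformOn_univ_real_forall_mem S fun _ => {y : ι → X | ∀ i, y i ≠ x}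

lemma uniformOn_univ_real_eq_and_forall_mem_forall_ne {S : Finset V} {v : V} (hv : v ∉ S) (i : ι)
    (x : X) :
    (uniformOn Set.univ).real {ω : V → ι → X | ω v i = x ∧ ∀ u ∈ S, ∀ i', ω u i' ≠ x} =
      (Fintype.card X : ℝ)⁻¹ * (1 - (Fintype.card X : ℝ)⁻¹) ^ (Fintype.card ι * S.card) := by
  have slot : (uniformOn Set.univ).real {y : ι → X | y i = x} = (Fintype.card X : ℝ)⁻¹ :=
    (uniformOn_univ_real_eval_preimage i {x}).trans (uniformOn_univ_real_singleton x)
  have ne_of_mem {u : V} (hu : u ∈ S) : u ≠ v := ne_of_mem_of_not_mem hu hv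
  have factor := uniformOn_univ_real_forall_mem (insert v S) fun u =>
    if u = v then {y : ι → X | y i = x} else {y | ∀ i', y i' ≠ x}
  rw [Finset.prod_insert hv, if_pos rfl, slot,
    Finset.prod_congr rfl fun u hu => by rw [if_neg (ne_of_mem hu)], Finset.prod_const,
    uniformOn_univ_real_forall_ne, ← pow_mul] at factor
  rw [← factor]
  congr 1
  ext ω
  simp +contextual [ne_of_mem]

lemma uniformOn_univ_real_uniqueHolder (S : Finset V) (v : V) (i : ι) :
    (uniformOn Set.univ).real (uniqueHolder S v i : Set (V → ι → X)) =
      (1 - (Fintype.card X : ℝ)⁻¹) ^ (Fintype.card ι * (S.erase v).card) := by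
  let E (x : X) : Set (V → ι → X) := {ω | ω v i = x ∧ ∀ u ∈ S.erase v, ∀ i', ω u i' ≠ x}
  have partition : (uniqueHolder S v i : Set (V → ι → X)) = ⋃ x, E x := by
    ext ω
    simp [uniqueHolder, E, imp.swap]
  have disjoint : Pairwise (Function.onFun Disjoint E) := fun x x' hne =>
    Set.disjoint_left.2 fun ω hω hω' => hne (hω.1.symm.trans hω'.1)
  rw [partition, measureReal_iUnion_fintype disjoint fun _ => .of_discrete]
  simp only [E, uniformOn_univ_real_eq_and_forall_mem_forall_ne (Finset.notMem_erase v S),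
    Finset.sum_const, Finset.card_univ, nsmul_eq_mul]
  exact mul_inv_cancel_left₀ (Nat.cast_ne_zero.2 Fintype.card_ne_zero) _

lemma uniformOn_univ_real_forall_notMem_uniqueHolder_le {C : Finset V} {S : V → Finset V} {N : ℕ}
    (hS : (C : Set V).PairwiseDisjoint S) (self_mem : ∀ v ∈ C, v ∈ S v)
    (card_le : ∀ v ∈ C, (S v).card ≤ N) (i : ι) :
    (uniformOn Set.univ).real {ω : V → ι → X | ∀ v ∈ C, ω ∉ uniqueHolder (S v) v i} ≤
      Real.exp (-(C.card * (1 - (Fintype.card X : ℝ)⁻¹) ^ (Fintype.card ι * N))) := by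
  set q : ℝ := 1 - (Fintype.card X : ℝ)⁻¹ with hq
  have q_nonneg : 0 ≤ q := sub_nonneg.2 (Nat.cast_inv_le_one _)
  have q_le_one : q ≤ 1 := sub_le_self _ (by positivity)
  have depends (v : V) (hv : v ∈ C) :
      DependsOn (· ∈ (uniqueHolder (S v) v i : Set (V → ι → X))ᶜ) (S v : Set V) := fun ω ω' h =>
    congrArg Not (dependsOn_mem_uniqueHolder (self_mem v hv) i h)
  have factor_le (v : V) (hv : v ∈ C) :
      (uniformOn Set.univ).real (uniqueHolder (S v) v i : Set (V → ι → X))ᶜ ≤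
        Real.exp (-q ^ (Fintype.card ι * N)) := by
    have erase_le : ((S v).erase v).card ≤ N :=
      (Finset.card_le_card (Finset.erase_subset _ _)).trans (card_le v hv)
    rw [probReal_compl_eq_one_sub .of_discrete, uniformOn_univ_real_uniqueHolder, ← hq]
    calc 1 - q ^ (Fintype.card ι * ((S v).erase v).card)
        ≤ 1 - q ^ (Fintype.card ι * N) := by
          gcongr 1 - ?_
          exact pow_le_pow_of_le_one q_nonneg q_le_one (Nat.mul_le_mul_left _ erase_le)
      _ ≤ Real.exp (-q ^ (Fintype.card ι * N)) := Real.one_sub_le_exp_neg _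
  calc (uniformOn Set.univ).real {ω : V → ι → X | ∀ v ∈ C, ω ∉ uniqueHolder (S v) v i}
      = (uniformOn Set.univ).real (⋂ v ∈ C, (uniqueHolder (S v) v i : Set (V → ι → X))ᶜ) := by
        congr 1
        ext ω
        simp
    _ = ∏ v ∈ C, (uniformOn Set.univ).real (uniqueHolder (S v) v i : Set (V → ι → X))ᶜ :=
        uniformOn_univ_real_biInter_of_dependsOn hS depends
    _ ≤ ∏ _v ∈ C, Real.exp (-q ^ (Fintype.card ι * N)) :=
        Finset.prod_le_prod (fun _ _ => measureReal_nonneg) factor_le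
    _ = Real.exp (-(C.card * q ^ (Fintype.card ι * N))) := by
        rw [Finset.prod_const, ← Real.exp_nat_mul, mul_neg]

end UniqueHolder

section TorusGeometry

variable {m : ℕ}

lemma cdist_eq_min_dist (a b : Fin m) :
    cdist a b = min (Nat.dist a b) (m - Nat.dist a b) := by
  have add_sub_mod (x y : Fin m) :
      (x.val + m - y.val) % m = if y ≤ x then x.val - y.val else x.val + m - y.val := by
    split_ifs with h
    · rw [Nat.sub_add_comm h, Nat.add_mod_right, Nat.mod_eq_of_lt (by omega)]
    · exact Nat.mod_eq_of_lt (by omega)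
  simp only [cdist, add_sub_mod, Nat.dist]
  split_ifs <;> omega

lemma cdist_comm (a b : Fin m) : cdist a b = cdist b a :=
  min_comm _ _

lemma cdist_triangle (a b c : Fin m) : cdist a c ≤ cdist a b + cdist b c := by
  simp only [cdist_eq_min_dist, Nat.dist]
  omega

lemma cdist_eq_min_val_sub (a b : Fin m) : cdist a b = min (a - b).val (b - a).val := by
  have add_sub_eq (x y : Fin m) : x.val + m - y.val = m - y.val + x.val := by omega
  simp only [cdist, Fin.val_sub, add_sub_eq]

lemma card_filter_cdist_le (a : Fin m) (r : ℕ) :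
    (Finset.univ.filter fun b => cdist a b ≤ r).card ≤ 2 * (r + 1) := by
  have : NeZero m := ⟨a.pos.ne'⟩
  have card_le {f : Fin m → Fin m} (hf : f.Injective) :
      (Finset.univ.filter fun b => (f b).val ≤ r).card ≤ r + 1 := by
    simpa only [Finset.card_range] using Finset.card_le_card_of_injOn
      (t := Finset.range (r + 1)) (fun b => (f b).val)
      (by simp [Set.MapsTo]) (Fin.val_injective.comp hf).injOn
  simp only [cdist_eq_min_val_sub, min_le_iff, Finset.filter_or]
  rw [two_mul]
  exact (Finset.card_union_le _ _).trans
    (add_le_add (card_le sub_right_injective) (card_le sub_left_injective))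

lemma le_card_filter_cdist {r : ℕ} (hr : r < m) (a : Fin m) :
    r + 1 ≤ (Finset.univ.filter fun b => cdist a b ≤ r).card := by
  have : NeZero m := ⟨a.pos.ne'⟩
  rw [← Fin.card_Iic ⟨r, hr⟩]
  refine Finset.card_le_card_of_injOn (a + ·) (fun k hk => ?_) (add_right_injective a).injOn
  have hk : k ≤ ⟨r, hr⟩ := Finset.mem_Iic.1 hk
  simp [cdist_eq_min_val_sub, Fin.le_def.1 hk]

lemma torusDist_self (u : Node m) : torusDist u u = 0 := by
  simp [torusDist, cdist]

lemma torusDist_comm (u v : Node m) : torusDist u v = torusDist v u :=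
  congrArg₂ (· + ·) (cdist_comm _ _) (cdist_comm _ _)

lemma torusDist_triangle (u v w : Node m) : torusDist u w ≤ torusDist u v + torusDist v w :=
  (add_le_add (cdist_triangle u.1 v.1 w.1) (cdist_triangle u.2 v.2 w.2)).trans
    (add_add_add_comm _ _ _ _).le

/-- The ball `B_r(u)` of the torus metric. -/
def torusBall (u : Node m) (r : ℕ) : Finset (Node m) :=
  Finset.univ.filter fun w => torusDist u w ≤ r

lemma mem_torusBall {u w : Node m} {r : ℕ} : w ∈ torusBall u r ↔ torusDist u w ≤ r := by
  simp [torusBall]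

lemma card_torusBall_le (u : Node m) (r : ℕ) : (torusBall u r).card ≤ (2 * (r + 1)) ^ 2 := by
  have subset : torusBall u r ⊆ (Finset.univ.filter fun b => cdist u.1 b ≤ r) ×ˢ
      (Finset.univ.filter fun b => cdist u.2 b ≤ r) := fun w hw => by
    rw [mem_torusBall, torusDist] at hw
    simp only [Finset.mem_product, Finset.mem_filter_univ]
    omega
  calc (torusBall u r).card
      ≤ _ := Finset.card_le_card subset
    _ ≤ 2 * (r + 1) * (2 * (r + 1)) := by
      rw [Finset.card_product]
      exact Nat.mul_le_mul (card_filter_cdist_le _ _) (card_filter_cdist_le _ _)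
    _ = (2 * (r + 1)) ^ 2 := (sq _).symm

lemma le_card_torusBall {r : ℕ} (hr : r < m) (u : Node m) :
    (r + 1) ^ 2 ≤ (torusBall u (2 * r)).card := by
  have subset : (Finset.univ.filter fun b => cdist u.1 b ≤ r) ×ˢ
      (Finset.univ.filter fun b => cdist u.2 b ≤ r) ⊆ torusBall u (2 * r) := fun w hw => by
    simp only [Finset.mem_product, Finset.mem_filter_univ] at hw
    rw [mem_torusBall, torusDist]
    omega
  calc (r + 1) ^ 2 = (r + 1) * (r + 1) := sq _
    _ ≤ _ := Nat.mul_le_mul (le_card_filter_cdist hr u.1) (le_card_filter_cdist hr u.2)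
    _ ≤ (torusBall u (2 * r)).card := by
      rw [← Finset.card_product]
      exact Finset.card_le_card subset

lemma exists_pairwiseDisjoint_torusBall (m s : ℕ) :
    ∃ C : Finset (Node m), (C : Set (Node m)).PairwiseDisjoint (torusBall · s) ∧
      m ^ 2 ≤ C.card * (2 * (2 * s + 1)) ^ 2 := by
  let close : SetRel (Node m) (Node m) := {p | torusDist p.1 p.2 ≤ 2 * s}
  have : close.IsRefl := ⟨fun u => (torusDist_self u).trans_le (Nat.zero_le _)⟩
  have : close.IsSymm := ⟨fun u v h => (torusDist_comm v u).trans_le h⟩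
  obtain ⟨N, hN⟩ := (Set.toFinite {N | N ⊆ Set.univ ∧ close.IsSeparated N}).exists_maximal
    ⟨∅, Set.empty_subset _, .empty⟩
  have cover : Finset.univ ⊆ N.toFinset.biUnion (torusBall · (2 * s)) := fun w _ => by
    obtain ⟨c, hc, hwc⟩ := SetRel.IsCover.of_maximal_isSeparated hN (Set.mem_univ w)
    exact Finset.mem_biUnion.2
      ⟨c, Set.mem_toFinset.2 hc, mem_torusBall.2 ((torusDist_comm c w).trans_le hwc)⟩
  refine ⟨N.toFinset, fun c hc c' hc' hne => Finset.disjoint_left.2 fun w hw hw' => ?_, ?_⟩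
  · refine hN.prop.2 (Set.mem_toFinset.1 hc) (Set.mem_toFinset.1 hc') hne ?_
    have near : torusDist c c' ≤ s + s := (torusDist_triangle c w c').trans
      (add_le_add (mem_torusBall.1 hw) ((torusDist_comm w c').trans_le (mem_torusBall.1 hw')))
    exact near.trans_eq (two_mul s).symm
  · calc m ^ 2 = (Finset.univ : Finset (Node m)).card := by simp [sq]
      _ ≤ (N.toFinset.biUnion (torusBall · (2 * s))).card := Finset.card_le_card cover
      _ ≤ _ := Finset.card_biUnion_le_card_mul _ _ _ fun c _ => card_torusBall_le c (2 * s)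

end TorusGeometry

section VoronoiCells

variable {m M K : ℕ} {ω : Placement m M K} {j : Fin K} {A : Node m → Node m} {v : Node m}

lemma exists_nearestAssignment (h : ∃ u, cached ω u j) : ∃ A, nearestAssignment ω j A := by
  obtain ⟨u, hu⟩ := h
  have nearest (w : Node m) :
      ∃ c, cached ω c j ∧ ∀ c', cached ω c' j → torusDist w c ≤ torusDist w c' := by
    simpa using (Finset.univ.filter fun c => cached ω c j).exists_min_image (torusDist w)
      ⟨u, by simpa using hu⟩
  choose A hA using nearest
  exact ⟨A, hA⟩

lemma torusBall_subset_cell (hA : nearestAssignment ω j A) (hv : cached ω v j) {r s : ℕ}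
    (hrs : 2 * r ≤ s) (unique : ∀ u ∈ torusBall v s, cached ω u j → u = v) :
    torusBall v r ⊆ cell A v := fun w hw => by
  rw [mem_torusBall] at hw
  have dist_A : torusDist w (A w) ≤ torusDist v w :=
    ((hA w).2 v hv).trans_eq (torusDist_comm w v)
  have A_mem : A w ∈ torusBall v s := mem_torusBall.2 <| by
    linarith [torusDist_triangle v w (A w)]
  simpa [cell] using unique (A w) A_mem (hA w).1

lemma cell_subset_torusBall (hA : nearestAssignment ω j A) {R : ℕ}
    (cover : ∀ w, ∃ u ∈ torusBall w R, cached ω u j) : cell A v ⊆ torusBall v R := fun w hw => by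
  obtain rfl : A w = v := by simpa [cell] using hw
  obtain ⟨u, hu, hcached⟩ := cover w
  rw [mem_torusBall, torusDist_comm]
  exact ((hA w).2 u hcached).trans (mem_torusBall.1 hu)

/-- The placements for which some file has a Voronoi assignment with a cell of size in `[a, b]`,
the event whose probability is bounded below. -/
def hasCellWithin (m M K : ℕ) (a b : ℝ) : Set (Placement m M K) :=
  {ω | ∃ (j : Fin K) (A : Node m → Node m) (v : Node m), nearestAssignment ω j A ∧
    a ≤ ((cell A v).card : ℝ) ∧ ((cell A v).card : ℝ) ≤ b}

lemma hasCellWithin_mono {a a' b b' : ℝ} (ha : a' ≤ a) (hb : b ≤ b') :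
    hasCellWithin m M K a b ⊆ hasCellWithin m M K a' b' := fun _ ⟨j, A, v, hA, hle, hge⟩ =>
  ⟨j, A, v, hA, ha.trans hle, hge.trans hb⟩

lemma mem_hasCellWithin {ρ ℓ : ℕ} (hρ : ρ < m) (hv : cached ω v j)
    (unique : ∀ u ∈ torusBall v (4 * ρ), cached ω u j → u = v)
    (cover : ∀ w, ∃ u ∈ torusBall w (2 * ℓ), cached ω u j) :
    ω ∈ hasCellWithin m M K ((ρ + 1) ^ 2) ((2 * (2 * ℓ + 1)) ^ 2) := by
  obtain ⟨A, hA⟩ := exists_nearestAssignment ⟨v, hv⟩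
  have lower : (ρ + 1) ^ 2 ≤ (cell A v).card := (le_card_torusBall hρ v).trans <|
    Finset.card_le_card <| torusBall_subset_cell hA hv (by omega) unique
  have upper : (cell A v).card ≤ (2 * (2 * ℓ + 1)) ^ 2 :=
    (Finset.card_le_card (cell_subset_torusBall hA cover)).trans (card_torusBall_le v _)
  exact ⟨j, A, v, hA, by exact_mod_cast lower, by exact_mod_cast upper⟩

end VoronoiCells

section PlacementProbability

variable {m M K : ℕ} [NeZero K]

lemma uniformOn_univ_real_exists_forall_not_cached_le {ℓ : ℕ} (hℓ : ℓ < m) :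
    (uniformOn Set.univ).real
        {ω : Placement m M K | ∃ p : Fin K × Node m, ∀ u ∈ torusBall p.2 (2 * ℓ), ¬cached ω u p.1} ≤
      K * m ^ 2 * (1 - (K : ℝ)⁻¹) ^ (M * (ℓ + 1) ^ 2) := by
  have single_le (p : Fin K × Node m) : (uniformOn Set.univ).real
      {ω : Placement m M K | ∀ u ∈ torusBall p.2 (2 * ℓ), ¬cached ω u p.1} ≤
        (1 - (K : ℝ)⁻¹) ^ (M * (ℓ + 1) ^ 2) := by
    simp only [cached, not_exists, ← ne_eq, uniformOn_univ_real_forall_mem_forall_ne,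
      Fintype.card_fin]
    exact pow_le_pow_of_le_one (sub_nonneg.2 (Nat.cast_inv_le_one _))
      (sub_le_self _ (by positivity)) (Nat.mul_le_mul_left _ (le_card_torusBall hℓ p.2))
  rw [Set.ofPred_exists]
  calc _ ≤ ∑ p : Fin K × Node m, _ := measureReal_iUnion_fintype_le _
    _ ≤ ∑ _ : Fin K × Node m, (1 - (K : ℝ)⁻¹) ^ (M * (ℓ + 1) ^ 2) :=
      Finset.sum_le_sum fun p _ => single_le p
    _ = K * m ^ 2 * (1 - (K : ℝ)⁻¹) ^ (M * (ℓ + 1) ^ 2) := by simp [sq]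

lemma uniformOn_univ_real_forall_notMem_uniqueHolder_torusBall_le (s : ℕ) (i : Fin M) :
    (uniformOn Set.univ).real
        {ω : Placement m M K | ∀ v, ω ∉ uniqueHolder (torusBall v s) v i} ≤
      Real.exp (-(m ^ 2 / (2 * (2 * s + 1)) ^ 2 *
        (1 - (K : ℝ)⁻¹) ^ (M * (2 * (s + 1)) ^ 2))) := by
  obtain ⟨C, disjoint, le_card⟩ := exists_pairwiseDisjoint_torusBall m s
  have card_ge : (m : ℝ) ^ 2 / (2 * (2 * s + 1)) ^ 2 ≤ C.card := by
    rw [div_le_iff₀ (by positivity)]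
    exact_mod_cast le_card
  have isolation := uniformOn_univ_real_forall_notMem_uniqueHolder_le (X := Fin K) disjoint
    (fun v _ => mem_torusBall.2 ((torusDist_self v).trans_le s.zero_le))
    (fun v _ => card_torusBall_le v s) i
  simp only [Fintype.card_fin] at isolation
  have restrict : {ω : Placement m M K | ∀ v, ω ∉ uniqueHolder (torusBall v s) v i} ⊆
      {ω | ∀ v ∈ C, ω ∉ uniqueHolder (torusBall v s) v i} := fun _ hω v _ => hω v
  refine (measureReal_mono restrict).trans (isolation.trans ?_)
  gcongr
  exact pow_nonneg (sub_nonneg.2 (Nat.cast_inv_le_one _)) _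

lemma one_sub_le_unifProb_hasCellWithin (hM : 1 ≤ M) {ρ ℓ : ℕ} (hρ : ρ < m) (hℓ : ℓ < m) :
    1 - (K * m ^ 2 * (1 - (K : ℝ)⁻¹) ^ (M * (ℓ + 1) ^ 2) +
        Real.exp (-(m ^ 2 / (2 * (8 * ρ + 1)) ^ 2 *
          (1 - (K : ℝ)⁻¹) ^ (M * (2 * (4 * ρ + 1)) ^ 2)))) ≤
      unifProb (hasCellWithin m M K ((ρ + 1) ^ 2) ((2 * (2 * ℓ + 1)) ^ 2)) := by
  let i : Fin M := ⟨0, hM⟩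
  let uncovered : Set (Placement m M K) :=
    {ω | ∃ p : Fin K × Node m, ∀ u ∈ torusBall p.2 (2 * ℓ), ¬cached ω u p.1}
  let crowded : Set (Placement m M K) := {ω | ∀ v, ω ∉ uniqueHolder (torusBall v (4 * ρ)) v i}
  have good : (uncovered ∪ crowded)ᶜ ⊆
      hasCellWithin m M K ((ρ + 1) ^ 2) ((2 * (2 * ℓ + 1)) ^ 2) := fun ω hω => by
    simp only [uncovered, crowded, Set.mem_compl_iff, Set.mem_union, Set.mem_ofPred_eq, not_or,
      not_exists, not_forall, not_not, exists_prop] at hω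
    obtain ⟨cover, v, isolated⟩ := hω
    exact mem_hasCellWithin hρ ⟨i, rfl⟩
      (fun u hu ⟨i', hi'⟩ => by_contra fun hne => isolated u hu hne i' hi')
      fun w => cover (ω v i, w)
  have crowded_le := uniformOn_univ_real_forall_notMem_uniqueHolder_torusBall_le
    (m := m) (K := K) (4 * ρ) i
  push_cast at crowded_le
  rw [show (2 * (4 * (ρ : ℝ)) + 1) = 8 * ρ + 1 by ring] at crowded_le
  rw [unifProb_eq_uniformOn_univ_real]
  calc _ ≤ 1 - (uniformOn Set.univ).real (uncovered ∪ crowded) := sub_le_sub_left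
        ((measureReal_union_le _ _).trans (add_le_add
          (uniformOn_univ_real_exists_forall_not_cached_le hℓ) crowded_le)) 1
    _ = (uniformOn Set.univ).real (uncovered ∪ crowded)ᶜ :=
        (probReal_compl_eq_one_sub .of_discrete).symm
    _ ≤ _ := measureReal_mono good

end PlacementProbability

section RealEstimates

open Real

lemma exists_nat_sq_le_le_succ_sq {t : ℝ} (ht : 0 ≤ t) :
    ∃ r : ℕ, (r : ℝ) ^ 2 ≤ t ∧ t ≤ ((r : ℝ) + 1) ^ 2 :=
  ⟨⌊√t⌋₊, (Real.le_sqrt (Nat.cast_nonneg _) ht).1 (Nat.floor_le (sqrt_nonneg t)),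
    (Real.sqrt_le_left (by positivity)).1 (Nat.lt_floor_add_one √t).le⟩

lemma mul_add_one_sq_le {a r t : ℝ} (ha : 0 ≤ a) (ht : 1 ≤ t) (hr : r ^ 2 ≤ t) :
    (a * r + 1) ^ 2 ≤ (a + 1) ^ 2 * t := by
  have r_le : r ≤ t := by nlinarith [sq_nonneg (r - 1)]
  nlinarith [mul_le_mul_of_nonneg_left hr (sq_nonneg a), mul_le_mul_of_nonneg_left r_le ha]

lemma one_sub_pow_le_exp_neg_mul {x : ℝ} (hx : x ≤ 1) (N : ℕ) : (1 - x) ^ N ≤ exp (-(N * x)) := by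
  rw [← mul_neg, exp_nat_mul]
  exact pow_le_pow_left₀ (sub_nonneg.2 hx) (one_sub_le_exp_neg x) N

lemma exp_neg_two_mul_le_one_sub {x : ℝ} (hx0 : 0 ≤ x) (hx : x ≤ 1 / 2) :
    exp (-(2 * x)) ≤ 1 - x := by
  have pos : 0 < 1 - x := by linarith
  rw [← le_log_iff_exp_le pos]
  calc -(2 * x) ≤ 1 - (1 - x)⁻¹ := by
        rw [neg_le, neg_sub, sub_le_iff_le_add, inv_le_iff_one_le_mul₀ pos]
        nlinarith
    _ ≤ log (1 - x) := one_sub_inv_le_log_of_pos pos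

lemma exp_neg_two_mul_le_one_sub_pow {x : ℝ} (hx0 : 0 ≤ x) (hx : x ≤ 1 / 2) (N : ℕ) :
    exp (-(2 * (N * x))) ≤ (1 - x) ^ N := by
  rw [mul_left_comm, ← mul_neg, exp_nat_mul]
  exact pow_le_pow_left₀ (exp_nonneg _) (exp_neg_two_mul_le_one_sub hx0 hx) N

lemma mul_mul_one_sub_inv_pow_le_inv {n K N : ℕ} (hK : 1 ≤ K) (hKn : K ≤ n)
    (hN : 3 * (K * log n) ≤ N) : (K : ℝ) * n * (1 - (K : ℝ)⁻¹) ^ N ≤ (n : ℝ)⁻¹ := by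
  have K_pos : (0 : ℝ) < K := Nat.cast_pos.2 hK
  have n_pos : (0 : ℝ) < n := Nat.cast_pos.2 (hK.trans hKn)
  have log_le : 3 * log n ≤ N * (K : ℝ)⁻¹ := by
    rw [← div_eq_mul_inv, le_div_iff₀ K_pos]
    linarith
  calc (K : ℝ) * n * (1 - (K : ℝ)⁻¹) ^ N
      ≤ n * n * exp (-(3 * log n)) := by
        refine mul_le_mul (by gcongr) ?_ (pow_nonneg (sub_nonneg.2 (Nat.cast_inv_le_one K)) N)
          (by positivity)
        exact (one_sub_pow_le_exp_neg_mul (Nat.cast_inv_le_one K) N).trans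
          (exp_le_exp.2 (neg_le_neg log_le))
    _ = (n : ℝ)⁻¹ := by
        rw [exp_neg, ← Nat.cast_ofNat, exp_nat_mul, exp_log n_pos]
        field_simp

lemma exp_neg_le_one_sub_inv_pow {K N : ℕ} {y : ℝ} (hK : 2 ≤ K) (hN : N ≤ K * y) :
    exp (-(2 * y)) ≤ (1 - (K : ℝ)⁻¹) ^ N := by
  have K_pos : (0 : ℝ) < K := by positivity
  have inv_le : (K : ℝ)⁻¹ ≤ 1 / 2 := by
    rw [one_div]
    exact inv_anti₀ two_pos (by exact_mod_cast hK)
  refine le_trans ?_ (exp_neg_two_mul_le_one_sub_pow (inv_nonneg.2 K_pos.le) inv_le N)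
  gcongr
  rwa [← div_eq_mul_inv, div_le_iff₀' K_pos]

end RealEstimates

section Asymptotics

open Asymptotics

variable {ε : ℝ}

lemma Kf_le {n : ℕ} (hε : 0 ≤ ε) (hn : 1 ≤ n) : Kf ε n ≤ n :=
  Nat.ceil_le.2 (Real.rpow_le_self_of_one_le (by exact_mod_cast hn) (by linarith))

lemma tendsto_Kf_atTop (hε : ε < 1) : Tendsto (Kf ε) atTop atTop :=
  tendsto_nat_ceil_atTop.comp <|
    (tendsto_rpow_atTop (sub_pos.2 hε)).comp tendsto_natCast_atTop_atTop

lemma tendsto_log_natCast_atTop : Tendsto (fun n : ℕ => Real.log n) atTop atTop :=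
  Real.tendsto_log_atTop.comp tendsto_natCast_atTop_atTop

lemma tendsto_Kf_mul_log_atTop (hε : ε < 1) :
    Tendsto (fun n : ℕ => (Kf ε n : ℝ) * Real.log n) atTop atTop :=
  (tendsto_natCast_atTop_atTop.comp (tendsto_Kf_atTop hε)).atTop_mul_atTop₀
    tendsto_log_natCast_atTop

lemma Kf_isBigO_rpow (hε : ε ≤ 1) :
    (fun n => (Kf ε n : ℝ)) =O[atTop] fun n : ℕ => (n : ℝ) ^ (1 - ε) := by
  refine .of_bound 2 ?_
  filter_upwards [eventually_ge_atTop 1] with n hn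
  have one_le : (1 : ℝ) ≤ (n : ℝ) ^ (1 - ε) :=
    Real.one_le_rpow (by exact_mod_cast hn) (sub_nonneg.2 hε)
  rw [Real.norm_of_nonneg (Nat.cast_nonneg _), Real.norm_of_nonneg (by positivity)]
  exact Nat.ceil_le_two_mul (by linarith)

lemma Kf_mul_log_isLittleO_rpow {δ : ℝ} (hε : ε ≤ 1) (hδ : 1 - ε < δ) :
    (fun n : ℕ => (Kf ε n : ℝ) * Real.log n) =o[atTop] fun n : ℕ => (n : ℝ) ^ δ := by
  have log_isLittleO : (fun n : ℕ => Real.log n) =o[atTop] fun n : ℕ => (n : ℝ) ^ (δ - (1 - ε)) :=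
    (isLittleO_log_rpow_atTop (sub_pos.2 hδ)).comp_tendsto tendsto_natCast_atTop_atTop
  refine ((Kf_isBigO_rpow hε).mul_isLittleO log_isLittleO).congr' .rfl ?_
  filter_upwards [eventually_gt_atTop 0] with n hn
  rw [← Real.rpow_add (Nat.cast_pos.2 hn), add_sub_cancel]

end Asymptotics

section Concentration

lemma exp_neg_le_one_sub_inv_pow_of_sq_le {M K ρ : ℕ} {t y : ℝ} (hK : 2 ≤ K) (ht : 1 ≤ t)
    (hρ : (ρ : ℝ) ^ 2 ≤ t) (hty : M * t = K * y) :
    Real.exp (-(200 * y)) ≤ (1 - (K : ℝ)⁻¹) ^ (M * (2 * (4 * ρ + 1)) ^ 2) := by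
  rw [show 200 * y = 2 * (100 * y) by ring]
  refine exp_neg_le_one_sub_inv_pow hK ?_
  push_cast
  have ball_le := mul_add_one_sq_le (a := 4) (by norm_num) ht hρ
  calc (M : ℝ) * (2 * (4 * ρ + 1)) ^ 2 = 4 * (M * (4 * ρ + 1) ^ 2) := by ring
    _ ≤ 4 * (M * ((4 + 1) ^ 2 * t)) := by gcongr
    _ = 100 * (M * t) := by ring
    _ = K * (100 * y) := by rw [hty, mul_left_comm]

lemma one_sub_le_unifProb_hasCellWithin_of_mul_eq {m n M K : ℕ} {κ T : ℝ} (hn : n = m ^ 2)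
    (hM : 1 ≤ M) (hK : 2 ≤ K) (hKn : K ≤ n) (hκ0 : 0 < κ) (hκ1 : κ ≤ 1)
    (hT : M * T = K * Real.log n) (hκT : 1 ≤ κ * T) (hTn : 3 * T < n) :
    1 - ((n : ℝ)⁻¹ + Real.exp (-(n / (324 * (κ * T)) * Real.exp (-(200 * (κ * Real.log n)))))) ≤
      unifProb (hasCellWithin m M K (κ * T) (108 * T)) := by
  have : NeZero K := ⟨by omega⟩
  have hT1 : 1 ≤ T := by nlinarith
  have hn' : (n : ℝ) = m ^ 2 := by exact_mod_cast hn
  have M_nonneg : (0 : ℝ) ≤ M := M.cast_nonneg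
  obtain ⟨ρ, hρ_le, le_hρ⟩ := exists_nat_sq_le_le_succ_sq (zero_le_one.trans hκT)
  obtain ⟨ℓ, hℓ_le, le_hℓ⟩ := exists_nat_sq_le_le_succ_sq (by linarith : 0 ≤ 3 * T)
  have lt_of_sq_le {r : ℕ} (hr : (r : ℝ) ^ 2 ≤ 3 * T) : r < m :=
    lt_of_pow_lt_pow_left₀ 2 m.zero_le (by exact_mod_cast hr.trans_lt (hTn.trans_eq hn'))
  have covering : (K : ℝ) * n * (1 - (K : ℝ)⁻¹) ^ (M * (ℓ + 1) ^ 2) ≤ (n : ℝ)⁻¹ := by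
    refine mul_mul_one_sub_inv_pow_le_inv (by omega) hKn ?_
    push_cast
    linarith [mul_le_mul_of_nonneg_left le_hℓ M_nonneg]
  have isolation : Real.exp (-(200 * (κ * Real.log n))) ≤
      (1 - (K : ℝ)⁻¹) ^ (M * (2 * (4 * ρ + 1)) ^ 2) :=
    exp_neg_le_one_sub_inv_pow_of_sq_le hK hκT hρ_le (by rw [mul_left_comm, hT, mul_left_comm])
  have packing : (n : ℝ) / (324 * (κ * T)) ≤ n / (2 * (8 * ρ + 1)) ^ 2 := by
    gcongr
    linarith [mul_add_one_sq_le (a := 8) (by norm_num) hκT hρ_le]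
  have upper : (2 * (2 * (ℓ : ℝ) + 1)) ^ 2 ≤ 108 * T := by
    linarith [mul_add_one_sq_le (a := 2) (by norm_num) (by linarith) hℓ_le]
  calc _ ≤ _ := sub_le_sub_left (add_le_add covering (Real.exp_le_exp.2 (neg_le_neg
        (mul_le_mul packing isolation (Real.exp_nonneg _) (by positivity))))) 1
    _ ≤ _ := by
      rw [hn']
      exact one_sub_le_unifProb_hasCellWithin hM (lt_of_sq_le (by nlinarith)) (lt_of_sq_le hℓ_le)
    _ ≤ _ := unifProb_mono (hasCellWithin_mono le_hρ upper)

lemma eventually_one_sub_le_unifProb_hasCellWithin {ε κ : ℝ} {M : ℕ} (hε0 : 0 < ε) (hε1 : ε < 1)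
    (hM : 1 ≤ M) (hκ0 : 0 < κ) (hκ1 : κ ≤ 1) :
    ∀ᶠ n : ℕ in atTop, ∀ m : ℕ, n = m ^ 2 →
      1 - ((n : ℝ)⁻¹ + Real.exp (-(n / (324 * (κ * (Kf ε n * Real.log n / M))) *
        Real.exp (-(200 * (κ * Real.log n)))))) ≤
      unifProb (hasCellWithin m M (Kf ε n) (κ * (Kf ε n * Real.log n / M))
        (108 * (Kf ε n * Real.log n / M))) := by
  have M_pos : (0 : ℝ) < M := Nat.cast_pos.2 hM
  have mean_lt := (Kf_mul_log_isLittleO_rpow (δ := 1) hε1.le (by linarith)).def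
    (div_pos M_pos four_pos)
  filter_upwards [eventually_ge_atTop 1, (tendsto_Kf_atTop hε1).eventually_ge_atTop 2,
    (tendsto_Kf_mul_log_atTop hε1).eventually_ge_atTop (M / κ), mean_lt]
    with n hn hK hT hTn m hnm
  refine one_sub_le_unifProb_hasCellWithin_of_mul_eq hnm hM hK (Kf_le hε0.le hn) hκ0 hκ1 ?_ ?_ ?_
  · field_simp
  · rw [← mul_div_assoc, one_le_div₀ M_pos]
    exact (div_le_iff₀' hκ0).1 hT
  · have n_pos : (0 : ℝ) < n := Nat.cast_pos.2 hn
    rw [Real.rpow_one, Real.norm_of_nonneg n_pos.le] at hTn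
    rw [← mul_div_assoc, div_lt_iff₀ M_pos]
    nlinarith [(Real.le_norm_self _).trans hTn, mul_pos M_pos n_pos]

lemma tendsto_div_mul_exp_neg_log_atTop {ε δ c : ℝ} (hε : ε < 1) (hδ : δ < ε) (hc : 0 < c) :
    Tendsto (fun n : ℕ => n / (c * (Kf ε n * Real.log n)) * Real.exp (-(δ * Real.log n)))
      atTop atTop := by
  have ratio : Tendsto (fun n : ℕ => c * (Kf ε n * Real.log n / (n : ℝ) ^ (1 - δ))) atTop
      (nhdsWithin 0 (Set.Ioi 0)) := by
    refine tendsto_nhdsWithin_iff.2 ⟨?_, ?_⟩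
    · simpa using (Kf_mul_log_isLittleO_rpow (δ := 1 - δ) hε.le
        (by linarith)).tendsto_div_nhds_zero.const_mul c
    · filter_upwards [eventually_gt_atTop 0,
        (tendsto_Kf_mul_log_atTop hε).eventually_gt_atTop 0] with n hn hpos
      exact mul_pos hc (div_pos hpos (Real.rpow_pos_of_pos (Nat.cast_pos.2 hn) _))
  refine ratio.inv_tendsto_nhdsGT_zero.congr' ?_
  filter_upwards [eventually_gt_atTop 0] with n hn
  have n_pos : (0 : ℝ) < n := Nat.cast_pos.2 hn
  have pow_eq : (n : ℝ) ^ (1 - δ) = n * Real.exp (-(δ * Real.log n)) := by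
    rw [sub_eq_add_neg, Real.rpow_add n_pos, Real.rpow_one, Real.rpow_def_of_pos n_pos]
    ring_nf
  simp only [Pi.inv_apply, pow_eq]
  rw [← mul_div_assoc, inv_div, mul_div_right_comm]

lemma tendsto_unifProb_hasCellWithin {ε κ : ℝ} {M : ℕ} (hε : ε < 1) (hM : 1 ≤ M) (hκ0 : 0 < κ)
    (hκ : 200 * κ < ε) :
    Tendsto (fun m : ℕ => unifProb (hasCellWithin m M (Kf ε (m ^ 2))
      (κ * (Kf ε (m ^ 2) * Real.log (m ^ 2 : ℕ) / M))
      (108 * (Kf ε (m ^ 2) * Real.log (m ^ 2 : ℕ) / M)))) atTop (nhds 1) := by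
  have square : Tendsto (fun m : ℕ => m ^ 2) atTop atTop := tendsto_pow_atTop two_ne_zero
  have exponent : Tendsto (fun n : ℕ => n / (324 * (κ * (Kf ε n * Real.log n / M))) *
      Real.exp (-(200 * (κ * Real.log n)))) atTop atTop :=
    (tendsto_div_mul_exp_neg_log_atTop (c := 324 * κ / M) hε hκ (by positivity)).congr
      fun n => by ring_nf
  have error := (tendsto_inv_atTop_nhds_zero_nat (𝕜 := ℝ)).add
    (Real.tendsto_exp_neg_atTop_nhds_zero.comp exponent)
  have lower := (error.const_sub 1).comp square
  rw [add_zero, sub_zero] at lower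
  refine tendsto_of_tendsto_of_tendsto_of_le_of_le' lower tendsto_const_nhds ?_
    (.of_forall fun m => unifProb_le_one _)
  filter_upwards [square.eventually (eventually_one_sub_le_unifProb_hasCellWithin
    (by linarith) hε hM hκ0 (by linarith))] with m hm
  exact hm m rfl

end Concentration

/-- Suppose `K = ⌈n^(1-ε)⌉` for a constant `0 < ε < 1` and `M` is a
fixed positive integer.  Under the Uniform popularity distribution, with probability
`1 - o(1)` over the random cache placement there is a file `W_j` whose Voronoi
tessellation contains a cell of size `Θ(K·log n/M)`. -/
theorem statement1 (ε : ℝ) (hε0 : 0 < ε) (hε1 : ε < 1) (M : ℕ) (hM : 1 ≤ M) :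
    ∃ c₁ c₂ : ℝ, 0 < c₁ ∧ 0 < c₂ ∧
      Tendsto (fun m : ℕ =>
        unifProb {ω : Placement m M (Kf ε (m ^ 2)) |
          ∃ (j : Fin (Kf ε (m ^ 2))) (A : Node m → Node m) (v : Node m),
            nearestAssignment ω j A ∧
            c₁ * (Kf ε (m ^ 2) : ℝ) * Real.log ((m ^ 2 : ℕ) : ℝ) / (M : ℝ) ≤
              ((cell A v).card : ℝ) ∧
            ((cell A v).card : ℝ) ≤
              c₂ * (Kf ε (m ^ 2) : ℝ) * Real.log ((m ^ 2 : ℕ) : ℝ) / (M : ℝ)})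
        atTop (nhds 1) := by
  refine ⟨ε / 400, 108, by positivity, by norm_num, ?_⟩
  simpa only [hasCellWithin, mul_assoc, mul_div_assoc] using
    tendsto_unifProb_hasCellWithin hε1 hM (κ := ε / 400) (by positivity) (by linarith)
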